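/- For every d ≥ 2, the function cov fails the Euclidean bound in dimension d: δ_{cov,d} · L_d(B_1^d) > 1, while cov(B_1^d) = 1 < δ_{cov,d} · L_d(B_1^d), where B_1^d is the open unit ball in ℝ^d. Equivalently, the sphere covering density δ_{cov,d} · L_d(B_1^d) of ℝ^d is strictly greater than 1 for d ≥ 2. -/

import Mathlib

open scoped Pointwise
open MeasureTheory Bornology Filter

/-- The unit cube `[0,1]^n` in `ℝ^n`. -/
def unitCube (n : ℕ) : Set (EuclideanSpace ℝ (Fin n)) :=
  {x | ∀ i, x i ∈ Set.Icc (0 : ℝ) 1}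

/-- `cov C` is the smallest number of open unit balls (centered anywhere) needed to cover `C`. -/
noncomputable def cov (d : ℕ) (C : Set (EuclideanSpace ℝ (Fin d))) : ℕ :=
  sInf {m : ℕ | ∃ X : Finset (EuclideanSpace ℝ (Fin d)),
    X.card = m ∧ C ⊆ ⋃ x ∈ X, Metric.ball x 1}

/-- `δ_{cov,d}`: the limit of `cov(2^k·[0,1]^d)/2^{kd}` (expressed as a `limsup`, which
coincides with the limit since the latter exists). -/
noncomputable def covDensity (d : ℕ) : ℝ :=
  Filter.limsup (fun k : ℕ => (cov d ((2 : ℝ) ^ k • unitCube d) : ℝ) / 2 ^ (k * d))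
    Filter.atTop

lemma aux_near {E : Type*} [NormedAddCommGroup E] [InnerProductSpace ℝ E] (a u : E)
    (hu : ‖u‖ = 1) (h1 : ‖a - u‖ < 1) (h2 : 1.98 ≤ ‖a‖) : ‖a - (2:ℝ) • u‖ < 0.283 := by
  have e1 := @norm_sub_sq_real E _ _ a u
  have e2 := @norm_sub_sq_real E _ _ a ((2:ℝ) • u)
  rw [inner_smul_right, norm_smul, hu] at e2
  rw [hu] at e1
  norm_num at e1 e2
  have h3 : ‖a - u‖ ^ 2 < 1 := by nlinarith [norm_nonneg (a - u)]
  have h4 : (1.98:ℝ) ^ 2 ≤ ‖a‖ ^ 2 := by gcongr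
  have h5 : ‖a - (2:ℝ) • u‖ ^ 2 < 0.283 ^ 2 := by
    rw [e1] at h3; rw [e2]; norm_num at h4 ⊢; linarith
  exact lt_of_pow_lt_pow_left₀ 2 (by norm_num) h5

lemma aux_key {E : Type*} [NormedAddCommGroup E] [InnerProductSpace ℝ E] (u v : E)
    (hu : ‖u‖ = 1) (hv : ‖v‖ = 1) (huv : inner ℝ u v = (4/5 : ℝ)) (X : Finset E) (c : E)
    (h : Metric.closedBall c 2 ⊆ ⋃ x ∈ X, Metric.ball x 1) :
    ∃ a ∈ X, ∃ b ∈ X, a ≠ b ∧ dist a b < 1.98 ∧ dist a c < 3 ∧ dist b c < 3 := by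
  have cover : ∀ p, dist p c ≤ 2 → ∃ x ∈ X, dist p x < 1 := by
    intro p hp
    have := h (Metric.mem_closedBall.2 hp)
    simpa using this
  obtain ⟨x, hxX, hx⟩ := cover c (by simp)
  have hw : ∀ w : E, ‖w‖ = 1 → ∃ y ∈ X, ‖(y - x) - w‖ < 1 ∧ y ≠ x ∧ dist y c < 3 := by
    intro w hw
    have hxw : dist (x + w) x = 1 := by simp [hw]
    have hpc : dist (x + w) c ≤ 2 := by
      have := dist_triangle (x + w) x c
      rw [dist_comm c x] at hx
      linarith
    obtain ⟨y, hy, hyd⟩ := cover _ hpc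
    refine ⟨y, hy, ?_, ?_, ?_⟩
    · rw [dist_comm, dist_eq_norm] at hyd
      rw [show y - x - w = y - (x + w) by abel]; exact hyd
    · rintro rfl
      linarith
    · have h1 := dist_triangle y (x + w) x
      have h2 := dist_triangle y x c
      rw [dist_comm c x] at hx
      rw [dist_comm] at hyd
      linarith
  have hxc : dist x c < 3 := by rw [dist_comm]; linarith
  obtain ⟨y, hy, hyu, hyx, hyc⟩ := hw u hu
  obtain ⟨z, hz, hzv, hzx, hzc⟩ := hw v hv
  by_cases c1 : dist y x < 1.98
  · exact ⟨y, hy, x, hxX, hyx, c1, hyc, hxc⟩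
  by_cases c2 : dist z x < 1.98
  · exact ⟨z, hz, x, hxX, hzx, c2, hzc, hxc⟩
  rw [not_lt, dist_eq_norm] at c1 c2
  have n1 := aux_near _ _ hu hyu c1
  have n2 := aux_near _ _ hv hzv c2
  have e : ‖u - v‖ ^ 2 = 0.4 := by
    rw [norm_sub_sq_real, hu, hv, huv]; norm_num
  have s1 : ‖u - v‖ < 0.633 := by
    apply lt_of_pow_lt_pow_left₀ 2 (by norm_num); rw [e]; norm_num
  have s2 : 0.632 < ‖u - v‖ := by
    apply lt_of_pow_lt_pow_left₀ 2 (norm_nonneg _); rw [e]; norm_num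
  have s3 : ‖(2:ℝ) • u - (2:ℝ) • v‖ = 2 * ‖u - v‖ := by
    rw [← smul_sub, norm_smul]; norm_num
  refine ⟨y, hy, z, hz, ?_, ?_, hyc, hzc⟩
  · rintro rfl
    have : ‖(2:ℝ) • u - (2:ℝ) • v‖ ≤ ‖y - x - (2:ℝ) • u‖ + ‖y - x - (2:ℝ) • v‖ := by
      rw [norm_sub_rev (y - x) ((2:ℝ) • u)]
      exact norm_sub_le_norm_sub_add_norm_sub _ _ _
    rw [s3] at this
    norm_num at *
    linarith
  · rw [dist_eq_norm]
    have t1 : y - z = (y - x - (2:ℝ) • u) + ((2:ℝ) • u - (2:ℝ) • v) - (z - x - (2:ℝ) • v) := by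
      abel
    have t2 := norm_sub_le ((y - x - (2:ℝ) • u) + ((2:ℝ) • u - (2:ℝ) • v)) (z - x - (2:ℝ) • v)
    have t3 := norm_add_le (y - x - (2:ℝ) • u) ((2:ℝ) • u - (2:ℝ) • v)
    rw [← t1] at t2
    rw [s3] at t3
    norm_num at *
    linarith

/-- A ball of radius 0.01 near `c` that is covered twice. -/
lemma aux_double (d : ℕ) (hd : 2 ≤ d) (X : Finset (EuclideanSpace ℝ (Fin d)))
    (c : EuclideanSpace ℝ (Fin d))
    (h : Metric.closedBall c 2 ⊆ ⋃ x ∈ X, Metric.ball x 1) :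
    ∃ m, dist m c < 3 ∧ ∀ p ∈ Metric.ball m 0.01, ∃ a ∈ X, ∃ b ∈ X, a ≠ b ∧
      p ∈ Metric.ball a 1 ∧ p ∈ Metric.ball b 1 := by
  let i : Fin d := ⟨0, by omega⟩
  let j : Fin d := ⟨1, by omega⟩
  have hij : i ≠ j := by simp [i, j]
  let e : EuclideanSpace ℝ (Fin d) := EuclideanSpace.single i 1
  let f : EuclideanSpace ℝ (Fin d) := EuclideanSpace.single j 1
  have he : ‖e‖ = 1 := by simp [e]
  have hf : ‖f‖ = 1 := by simp [f]
  have hef : inner ℝ e f = (0:ℝ) := by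
    simp [e, f, EuclideanSpace.inner_single_left, hij]
  have hi : inner ℝ e ((4/5:ℝ) • e + (3/5:ℝ) • f) = (4/5:ℝ) := by
    rw [inner_add_right, inner_smul_right, inner_smul_right, hef, real_inner_self_eq_norm_sq, he]
    norm_num
  have hn : ‖(4/5:ℝ) • e + (3/5:ℝ) • f‖ = 1 := by
    have : ‖(4/5:ℝ) • e + (3/5:ℝ) • f‖ ^ 2 = 1 := by
      rw [norm_add_sq_real, inner_smul_left, inner_smul_right, hef, norm_smul, norm_smul, he, hf]
      norm_num
    nlinarith [norm_nonneg ((4/5:ℝ) • e + (3/5:ℝ) • f)]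
  obtain ⟨a, ha, b, hb, hab, hd, hac, hbc⟩ := aux_key e _ he hn hi X c h
  refine ⟨midpoint ℝ a b, ?_, ?_⟩
  · have : midpoint ℝ a b ∈ Metric.ball c 3 :=
      (convex_ball c 3).midpoint_mem hac hbc
    simpa using this
  · intro p hp
    rw [Metric.mem_ball] at hp
    refine ⟨a, ha, b, hb, hab, ?_, ?_⟩
    · have h1 := dist_triangle p (midpoint ℝ a b) a
      have h2 : dist (midpoint ℝ a b) a = ‖(2:ℝ)‖⁻¹ * dist a b := dist_midpoint_left a b
      rw [Metric.mem_ball]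
      norm_num at *
      linarith
    · have h1 := dist_triangle p (midpoint ℝ a b) b
      have h2 : dist (midpoint ℝ a b) b = ‖(2:ℝ)‖⁻¹ * dist a b := dist_midpoint_right a b
      rw [Metric.mem_ball]
      norm_num at *
      linarith

lemma mem_cube (d k : ℕ) (x : EuclideanSpace ℝ (Fin d)) :
    x ∈ (2:ℝ) ^ k • unitCube d ↔ ∀ i, 0 ≤ x i ∧ x i ≤ 2 ^ k := by
  have h2 : (0:ℝ) < 2 ^ k := by positivity
  rw [Set.mem_smul_set_iff_inv_smul_mem₀ h2.ne']
  simp only [unitCube, Set.mem_ofPred_eq, Set.mem_Icc, PiLp.smul_apply, smul_eq_mul]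
  refine forall_congr' fun i => and_congr ?_ ?_
  · rw [mul_nonneg_iff_of_pos_left (by positivity)]
  · rw [inv_mul_le_iff₀ h2, mul_one]

lemma vol_unitCube (d : ℕ) : volume (unitCube d) = 1 := by
  have h := (EuclideanSpace.volume_preserving_symm_measurableEquiv_toLp (Fin d)).measure_preimage_equiv
    (Set.Icc (0 : Fin d → ℝ) 1)
  rw [Real.volume_Icc_pi] at h
  simp at h
  rw [← h]
  congr 1
  ext x
  simp [unitCube, Set.mem_Icc, Pi.le_def, forall_and]

lemma vol_cube (d k : ℕ) : volume ((2:ℝ) ^ k • unitCube d) = ENNReal.ofReal (2 ^ (k * d)) := by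
  rw [Measure.addHaar_smul, vol_unitCube, mul_one]
  simp [abs_of_pos, pow_mul]

lemma meas_cube (d k : ℕ) : MeasurableSet ((2:ℝ) ^ k • unitCube d) := by
  have : (2:ℝ) ^ k • unitCube d = ⋂ i, {x : EuclideanSpace ℝ (Fin d) | 0 ≤ x i ∧ x i ≤ 2 ^ k} := by
    ext x; simp [mem_cube]
  rw [this]
  apply MeasurableSet.iInter
  intro i
  apply IsClosed.measurableSet
  have hc : Continuous fun x : EuclideanSpace ℝ (Fin d) => x i := by fun_prop
  exact (isClosed_le continuous_const hc).inter (isClosed_le hc continuous_const)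

/-- A grid cover. -/
lemma cover_exists (d : ℕ) (hd : 2 ≤ d) (k : ℕ) : ∃ X : Finset (EuclideanSpace ℝ (Fin d)),
    X.card ≤ (2 ^ k * d + 1) ^ d ∧ (2:ℝ) ^ k • unitCube d ⊆ ⋃ x ∈ X, Metric.ball x 1 := by
  classical
  let g : (Fin d → Fin (2 ^ k * d + 1)) → EuclideanSpace ℝ (Fin d) :=
    fun n => WithLp.toLp 2 (fun i => ((n i : ℕ) : ℝ) / d)
  have hd0 : (0:ℝ) < d := by positivity
  refine ⟨Finset.univ.image g, ?_, ?_⟩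
  · refine Finset.card_image_le.trans ?_
    simp
  · intro x hx
    rw [mem_cube] at hx
    have hb : ∀ i, ⌊x i * d⌋₊ < 2 ^ k * d + 1 := by
      intro i
      rw [Nat.lt_succ_iff]
      apply Nat.floor_le_of_le
      push_cast
      have := (hx i).2
      gcongr
    let n : Fin d → Fin (2 ^ k * d + 1) := fun i => ⟨⌊x i * d⌋₊, hb i⟩
    simp only [Finset.mem_image, Finset.mem_univ, true_and, Set.mem_iUnion, Set.iUnion_exists,
      Set.iUnion_iUnion_eq']
    refine ⟨n, ?_⟩
    rw [Metric.mem_ball, EuclideanSpace.dist_eq, Real.sqrt_lt' one_pos]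
    have hi : ∀ i, dist (x i) (g n i) ^ 2 ≤ (1 / d : ℝ) ^ 2 := by
      intro i
      have h1 := Nat.floor_le (a := x i * d) (mul_nonneg (hx i).1 hd0.le)
      have h2 := Nat.lt_floor_add_one (x i * d)
      have : g n i = (⌊x i * d⌋₊ : ℝ) / d := rfl
      rw [this, Real.dist_eq]
      have h3 : |x i - (⌊x i * d⌋₊ : ℝ) / d| ≤ 1 / d := by
        rw [abs_le]
        constructor
        · have : (⌊x i * d⌋₊ : ℝ) / d ≤ x i := by rw [div_le_iff₀ hd0]; exact h1
          have : 0 < 1 / (d:ℝ) := by positivity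
          linarith
        · have : x i ≤ ((⌊x i * d⌋₊ : ℝ) + 1) / d := by rw [le_div_iff₀ hd0]; exact h2.le
          rw [add_div] at this
          linarith
      gcongr
    calc _ ≤ ∑ i : Fin d, (1 / d : ℝ) ^ 2 := Finset.sum_le_sum fun i _ => hi i
      _ = 1 / d := by simp; field_simp
      _ < 1 ^ 2 := by
        rw [div_lt_iff₀ hd0]
        have : (2:ℝ) ≤ d := by exact_mod_cast hd
        linarith

lemma cov_le {d : ℕ} {C : Set (EuclideanSpace ℝ (Fin d))} (X : Finset (EuclideanSpace ℝ (Fin d)))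
    (hX : C ⊆ ⋃ x ∈ X, Metric.ball x 1) : cov d C ≤ X.card := by
  unfold cov
  apply Nat.sInf_le
  exact ⟨X, rfl, hX⟩

lemma cov_upper (d : ℕ) (hd : 2 ≤ d) (k : ℕ) :
    (cov d ((2:ℝ) ^ k • unitCube d) : ℝ) / 2 ^ (k * d) ≤ (d + 1) ^ d := by
  obtain ⟨X, hc, hX⟩ := cover_exists d hd k
  have h1 : cov d ((2:ℝ) ^ k • unitCube d) ≤ (2 ^ k * d + 1) ^ d :=
    (cov_le X hX).trans hc
  have h2 : (2 ^ k * d + 1) ^ d ≤ (d + 1) ^ d * 2 ^ (k * d) := by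
    rw [pow_mul, ← mul_pow]
    have : 1 ≤ 2 ^ k := Nat.one_le_two_pow
    gcongr
    nlinarith
  rw [div_le_iff₀ (by positivity)]
  exact_mod_cast h1.trans h2

lemma cov_attained (d : ℕ) (hd : 2 ≤ d) (k : ℕ) : ∃ X : Finset (EuclideanSpace ℝ (Fin d)),
    X.card = cov d ((2:ℝ) ^ k • unitCube d) ∧
      (2:ℝ) ^ k • unitCube d ⊆ ⋃ x ∈ X, Metric.ball x 1 := by
  obtain ⟨X, hc, hX⟩ := cover_exists d hd k
  exact Nat.sInf_mem (s := {m : ℕ | ∃ X : Finset (EuclideanSpace ℝ (Fin d)),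
    X.card = m ∧ (2:ℝ) ^ k • unitCube d ⊆ ⋃ x ∈ X, Metric.ball x 1}) ⟨_, X, rfl, hX⟩

lemma cov_lower (d : ℕ) (hd : 2 ≤ d) (k : ℕ) :
    (2:ENNReal) ^ ((k + 3) * d) + 2 ^ (k * d) *
      volume (Metric.ball (0 : EuclideanSpace ℝ (Fin d)) 0.01) ≤
    (cov d ((2:ℝ) ^ (k + 3) • unitCube d) : ENNReal) *
      volume (Metric.ball (0 : EuclideanSpace ℝ (Fin d)) 1) := by
  classical
  obtain ⟨X, hc, hX⟩ := cov_attained d hd (k + 3)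
  rw [← hc]
  let c : (Fin d → Fin (2 ^ k)) → EuclideanSpace ℝ (Fin d) :=
    fun n => WithLp.toLp 2 (fun i => 8 * ((n i : ℕ) : ℝ) + 4)
  have coord : ∀ (x y : EuclideanSpace ℝ (Fin d)) i, |x i - y i| ≤ dist x y := by
    intro x y i
    rw [dist_eq_norm]
    exact PiLp.norm_apply_le (x - y) i
  have hcb : ∀ n, Metric.closedBall (c n) 4 ⊆ (2:ℝ) ^ (k + 3) • unitCube d := by
    intro n x hx
    rw [mem_cube]
    intro i
    have h1 := (coord x (c n) i).trans hx
    have h2 : c n i = 8 * ((n i : ℕ) : ℝ) + 4 := rfl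
    rw [h2, abs_le] at h1
    have h3 : ((n i : ℕ) : ℝ) + 1 ≤ 2 ^ k := by exact_mod_cast (n i).2
    have h4 : (0:ℝ) ≤ ((n i : ℕ) : ℝ) := by positivity
    rw [pow_add]
    constructor <;> linarith
  have hm := fun n => aux_double d hd X (c n)
    (((Metric.closedBall_subset_closedBall (by norm_num)).trans (hcb n)).trans hX)
  choose m hm1 hm2 using hm
  let W : Set (EuclideanSpace ℝ (Fin d)) := ⋃ n, Metric.ball (m n) 0.01
  have hWm : MeasurableSet W := MeasurableSet.iUnion fun n => Metric.isOpen_ball.measurableSet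
  have hdis : Pairwise (Function.onFun Disjoint fun n => Metric.ball (m n) (0.01:ℝ)) := by
    intro n n' hnn
    rw [Function.onFun]
    apply Metric.ball_disjoint_ball
    obtain ⟨i, hi⟩ := Function.ne_iff.1 hnn
    have h1 := coord (c n) (c n') i
    have h2 : c n i - c n' i = 8 * (((n i : ℕ) : ℝ) - ((n' i : ℕ) : ℝ)) := by
      simp only [c]; ring
    have h3 : (1:ℝ) ≤ |((n i : ℕ) : ℝ) - ((n' i : ℕ) : ℝ)| := by
      have : ((n i : ℕ) : ℤ) - ((n' i : ℕ) : ℤ) ≠ 0 := by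
        rw [sub_ne_zero]; exact_mod_cast fun h => hi (Fin.ext h)
      exact_mod_cast Int.one_le_abs this
    rw [h2, abs_mul, abs_of_pos (by norm_num : (0:ℝ) < 8)] at h1
    have h4 := dist_triangle4 (c n) (m n) (m n') (c n')
    have h5 := hm1 n
    have h6 := hm1 n'
    rw [dist_comm] at h5
    norm_num at *
    linarith
  have hWv : volume W = 2 ^ (k * d) *
      volume (Metric.ball (0 : EuclideanSpace ℝ (Fin d)) 0.01) := by
    rw [measure_iUnion hdis fun n => Metric.isOpen_ball.measurableSet]
    simp only [Measure.addHaar_ball_center]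
    rw [tsum_fintype]
    simp [pow_mul]
  have hQv : volume ((2:ℝ) ^ (k + 3) • unitCube d) = (2:ENNReal) ^ ((k + 3) * d) := by
    rw [vol_cube, ENNReal.ofReal_pow (by norm_num)]; simp
  set Q := (2:ℝ) ^ (k + 3) • unitCube d with hQ
  have hQm : MeasurableSet Q := meas_cube d (k + 3)
  have hWQ : W ⊆ Q := by
    apply Set.iUnion_subset
    intro n p hp
    apply hcb n
    rw [Metric.mem_ball] at hp
    rw [Metric.mem_closedBall]
    have := dist_triangle p (m n) (c n)
    have := hm1 n
    norm_num at *
    linarith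
  have hpt : ∀ p, Q.indicator (1 : EuclideanSpace ℝ (Fin d) → ENNReal) p + W.indicator 1 p ≤
      ∑ x ∈ X, (Metric.ball x 1).indicator 1 p := by
    intro p
    by_cases hp : p ∈ W
    · have hpQ := hWQ hp
      obtain ⟨n, hn⟩ := Set.mem_iUnion.1 hp
      obtain ⟨a, ha, b, hb, hab, hpa, hpb⟩ := hm2 n p hn
      have hs : ({a, b} : Finset _) ⊆ X := by
        intro z hz
        simp at hz
        rcases hz with rfl | rfl <;> assumption
      refine le_trans ?_ (Finset.sum_le_sum_of_subset hs)
      rw [Finset.sum_pair hab]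
      simp only [Set.indicator_of_mem, hp, hpQ, hpa, hpb]
      exact le_rfl
    · by_cases hpQ : p ∈ Q
      · have := hX hpQ
        simp only [Set.mem_iUnion] at this
        obtain ⟨a, ha, hpa⟩ := this
        refine le_trans ?_ (Finset.single_le_sum (fun _ _ => zero_le) ha)
        simp [hp, hpQ, Set.indicator_of_mem hpa]
      · simp [hp, hpQ]
  calc _ = ∫⁻ p, (Q.indicator (1 : EuclideanSpace ℝ (Fin d) → ENNReal) p + W.indicator 1 p) := by
        rw [lintegral_add_left (measurable_one.indicator hQm), lintegral_indicator_one hQm,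
          lintegral_indicator_one hWm, hQv, hWv]
    _ ≤ ∫⁻ p, ∑ x ∈ X, (Metric.ball x 1).indicator 1 p := lintegral_mono hpt
    _ = _ := by
      rw [lintegral_finsetSum _ fun x _ => measurable_one.indicator Metric.isOpen_ball.measurableSet]
      simp only [lintegral_indicator_one Metric.isOpen_ball.measurableSet,
        Measure.addHaar_ball_center]
      simp

/-- For `d ≥ 2`, `cov` fails the Euclidean bound in dimension `d`:
`cov(B_1^d) = 1` while the sphere covering density `δ_{cov,d}·L_d(B_1^d)` is strictly
greater than `1`. -/
theorem cov_fails_euclidean_bound (d : ℕ) (hd : 2 ≤ d) :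
    cov d (Metric.ball (0 : EuclideanSpace ℝ (Fin d)) 1) = 1 ∧
    1 < covDensity d * (volume (Metric.ball (0 : EuclideanSpace ℝ (Fin d)) 1)).toReal := by
  constructor
  · apply le_antisymm
    · simpa using cov_le (C := Metric.ball (0 : EuclideanSpace ℝ (Fin d)) 1) {0} (by simp)
    · unfold cov
      refine le_csInf ⟨1, ⟨{0}, by simp, by simp⟩⟩ ?_
      rintro m ⟨X, rfl, hX⟩
      rw [Nat.one_le_iff_ne_zero, Finset.card_ne_zero]
      have := hX (Metric.mem_ball_self one_pos)
      simp only [Set.mem_iUnion] at this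
      obtain ⟨x, hx, -⟩ := this
      exact ⟨x, hx⟩
  · have hVt : volume (Metric.ball (0 : EuclideanSpace ℝ (Fin d)) 1) ≠ ⊤ :=
      measure_ball_lt_top.ne
    have hvt : volume (Metric.ball (0 : EuclideanSpace ℝ (Fin d)) 0.01) ≠ ⊤ :=
      measure_ball_lt_top.ne
    have hV : 0 < (volume (Metric.ball (0 : EuclideanSpace ℝ (Fin d)) 1)).toReal :=
      ENNReal.toReal_pos (Metric.measure_ball_pos _ _ one_pos).ne' hVt
    have hv : 0 < (volume (Metric.ball (0 : EuclideanSpace ℝ (Fin d)) 0.01)).toReal :=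
      ENNReal.toReal_pos (Metric.measure_ball_pos _ _ (by norm_num)).ne' hvt
    have hlow : ∀ k, (2:ℝ) ^ ((k + 3) * d) + 2 ^ (k * d) *
        (volume (Metric.ball (0 : EuclideanSpace ℝ (Fin d)) 0.01)).toReal ≤
        (cov d ((2:ℝ) ^ (k + 3) • unitCube d) : ℝ) *
        (volume (Metric.ball (0 : EuclideanSpace ℝ (Fin d)) 1)).toReal := by
      intro k
      have := ENNReal.toReal_mono (ENNReal.mul_ne_top (ENNReal.natCast_ne_top _) hVt)
        (cov_lower d hd k)
      rw [ENNReal.toReal_add (by simp) (ENNReal.mul_ne_top (by simp) hvt)] at this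
      simpa using this
    set V := (volume (Metric.ball (0 : EuclideanSpace ℝ (Fin d)) 1)).toReal
    set v := (volume (Metric.ball (0 : EuclideanSpace ℝ (Fin d)) 0.01)).toReal
    have hlim : (1 + v / 2 ^ (3 * d)) / V ≤ covDensity d := by
      apply le_limsup_of_frequently_le
      · apply Eventually.frequently
        filter_upwards [eventually_ge_atTop 3] with k hk
        obtain ⟨j, rfl⟩ := Nat.exists_eq_add_of_le' hk
        rw [div_le_div_iff₀ hV (by positivity)]
        refine le_trans (le_of_eq ?_) (hlow j)
        rw [add_mul j 3 d, pow_add]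
        field_simp
      · exact isBoundedUnder_of ⟨_, fun k => cov_upper d hd k⟩
    rw [div_le_iff₀ hV] at hlim
    have : 0 < v / 2 ^ (3 * d) := by positivity
    linarith
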